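/- Every continuous linear functional Λ on 𝒞([-T,0]) (continuous with respect to the convergence: uniform boundedness, uniform convergence on compacts of [-T,0[, and convergence at 0) admits a unique representation Λη = ∫_{[-T,0]} η(x) μ(dx) for all η ∈ 𝒞([-T,0]), where μ is a finite signed Borel measure on [-T,0]. -/

import Mathlib

open MeasureTheory Filter Topology Set

/-- Membership in `𝒞([-T,0])`: bounded on `[-T,0]` and continuous on `[-T,0[`. -/
def memScrC (T : ℝ) (η : ℝ → ℝ) : Prop :=
  (∃ C, ∀ x ∈ Set.Icc (-T) (0:ℝ), |η x| ≤ C) ∧ ContinuousOn η (Set.Ico (-T) 0)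

/-!
Making `0` an isolated point turns `[-T, 0]` into a locally compact, σ-compact space whose bounded
continuous functions are exactly the elements of `𝒞([-T, 0])`, and the convergence of `𝒞([-T, 0])`
into uniform boundedness with uniform convergence on compact sets. A functional `Λ` continuous for
this convergence is norm continuous, hence the difference of two positive functionals by the
Riesz–Kantorovich formula, and the Riesz–Markov–Kakutani theorem represents each of these by a
finite measure, but only on functions of compact support. The positive functionals are not known
to inherit the continuity of `Λ`, so it is for their difference that cutoffs equal to `1` on larger
and larger compact sets extend the representation to all bounded continuous functions.
-/

open scoped BoundedContinuousFunction CompactlySupported Pointwise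

section RieszKantorovich

theorem Icc_zero_smul {𝕜 E : Type*} [Field 𝕜] [LinearOrder 𝕜] [IsStrictOrderedRing 𝕜]
    [AddCommGroup E] [PartialOrder E] [Module 𝕜 E] [PosSMulMono 𝕜 E] {c : 𝕜} (hc : 0 ≤ c) {f : E}
    (hf : 0 ≤ f) : Icc 0 (c • f) = c • Icc 0 f := by
  rcases hc.eq_or_lt with rfl | hc
  · rw [zero_smul, Icc_self, zero_smul_set (nonempty_Icc.2 hf), singleton_zero]
  · simpa using ((OrderIso.smulRight hc).image_Icc 0 f).symm

variable {E : Type*} [AddCommGroup E] [Lattice E] [IsOrderedAddMonoid E]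

theorem Icc_zero_add {f g : E} (hf : 0 ≤ f) (hg : 0 ≤ g) :
    Icc 0 (f + g) = Icc 0 f + Icc 0 g := by
  refine Subset.antisymm (fun h ⟨h_nonneg, h_le⟩ ↦ ?_) ?_
  · refine mem_add.2 ⟨h ⊓ f, ⟨le_inf h_nonneg hf, inf_le_right⟩, h - h ⊓ f,
      ⟨sub_nonneg.2 inf_le_left, ?_⟩, add_sub_cancel _ _⟩
    rw [sub_le_iff_le_add, ← sub_le_iff_le_add']
    exact le_inf (sub_le_self h hg) (sub_le_iff_le_add.2 h_le)
  · simpa using Icc_add_Icc_subset (0 : E) f 0 g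

variable [Module ℝ E] [PosSMulMono ℝ E]

theorem exists_linearMap_eqOn_nonneg {F : Type*} [AddCommGroup F] [Module ℝ F] (p : E → F)
    (hadd : ∀ f g, 0 ≤ f → 0 ≤ g → p (f + g) = p f + p g)
    (hsmul : ∀ (c : ℝ) f, 0 ≤ c → 0 ≤ f → p (c • f) = c • p f) :
    ∃ P : E →ₗ[ℝ] F, EqOn P p (Ici 0) := by
  have hparts {a f g : E} (hf : 0 ≤ f) (hg : 0 ≤ g) (h : a = f - g) :
      p a⁺ - p a⁻ = p f - p g := by
    have hadd_eq : a⁺ + g = f + a⁻ := by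
      rw [← sub_eq_sub_iff_add_eq_add, posPart_sub_negPart, h]
    rw [sub_eq_sub_iff_add_eq_add, ← hadd _ _ (posPart_nonneg a) hg,
      ← hadd _ _ hf (negPart_nonneg a), hadd_eq]
  refine ⟨{ toFun := fun a ↦ p a⁺ - p a⁻, map_add' := fun a b ↦ ?_, map_smul' := fun c a ↦ ?_ },
    fun a (ha : 0 ≤ a) ↦ ?_⟩
  · have hab : a + b = (a⁺ + b⁺) - (a⁻ + b⁻) := by
      rw [add_sub_add_comm, posPart_sub_negPart, posPart_sub_negPart]
    rw [hparts (add_nonneg (posPart_nonneg a) (posPart_nonneg b))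
      (add_nonneg (negPart_nonneg a) (negPart_nonneg b)) hab,
      hadd _ _ (posPart_nonneg a) (posPart_nonneg b),
      hadd _ _ (negPart_nonneg a) (negPart_nonneg b), add_sub_add_comm]
  · rw [RingHom.id_apply]
    rcases le_total 0 c with hc | hc
    · have hca : c • a = c • a⁺ - c • a⁻ := by rw [← smul_sub, posPart_sub_negPart]
      rw [hparts (smul_nonneg hc (posPart_nonneg a)) (smul_nonneg hc (negPart_nonneg a)) hca,
        hsmul _ _ hc (posPart_nonneg a), hsmul _ _ hc (negPart_nonneg a), smul_sub]
    · have hc' : 0 ≤ -c := neg_nonneg.2 hc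
      have hca : c • a = (-c) • a⁻ - (-c) • a⁺ := by
        rw [← smul_sub, neg_smul, ← smul_neg, neg_sub, posPart_sub_negPart]
      rw [hparts (smul_nonneg hc' (negPart_nonneg a)) (smul_nonneg hc' (posPart_nonneg a)) hca,
        hsmul _ _ hc' (posPart_nonneg a), hsmul _ _ hc' (negPart_nonneg a), ← smul_sub, neg_smul,
        ← smul_neg, neg_sub]
  · have hp_zero : p 0 = 0 := by simpa using hsmul 0 0 le_rfl le_rfl
    simpa [hp_zero] using hparts ha le_rfl (sub_zero a).symm

theorem exists_positiveLinearMap_sub_eq_of_bddAbove (Λ : E →ₗ[ℝ] ℝ)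
    (hΛ : ∀ f, 0 ≤ f → BddAbove (Λ '' Icc 0 f)) :
    ∃ P N : E →ₚ[ℝ] ℝ, ∀ f, Λ f = P f - N f := by
  have hne {f : E} (hf : 0 ≤ f) : (Λ '' Icc 0 f).Nonempty := (nonempty_Icc.2 hf).image _
  -- The Riesz–Kantorovich formula for the positive part of `Λ`.
  let p : E → ℝ := fun f ↦ sSup (Λ '' Icc 0 f)
  have hp_add (f g : E) (hf : 0 ≤ f) (hg : 0 ≤ g) : p (f + g) = p f + p g := by
    simp only [p]
    rw [Icc_zero_add hf hg, image_add, csSup_add (hne hf) (hΛ f hf) (hne hg) (hΛ g hg)]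
  have hp_smul (c : ℝ) (f : E) (hc : 0 ≤ c) (hf : 0 ≤ f) : p (c • f) = c • p f := by
    simp only [p]
    rw [Icc_zero_smul hc hf, image_smul_set, Real.sSup_smul_of_nonneg hc]
  have hp_nonneg (f : E) (hf : 0 ≤ f) : 0 ≤ p f :=
    le_csSup (hΛ f hf) ⟨0, ⟨le_rfl, hf⟩, map_zero Λ⟩
  have hp_ge (f : E) (hf : 0 ≤ f) : Λ f ≤ p f :=
    le_csSup (hΛ f hf) (mem_image_of_mem Λ ⟨hf, le_rfl⟩)
  obtain ⟨P, hP⟩ := exists_linearMap_eqOn_nonneg p hp_add hp_smul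
  refine ⟨.mk₀ P fun f hf ↦ ?_, .mk₀ (P - Λ) fun f hf ↦ ?_, fun f ↦ (sub_sub_cancel (P f) _).symm⟩
  · rw [hP hf]
    exact hp_nonneg f hf
  · rw [LinearMap.sub_apply, hP hf]
    exact sub_nonneg.2 (hp_ge f hf)

end RieszKantorovich

theorem exists_positiveLinearMap_sub_eq_of_strongDual {E : Type*} [NormedAddCommGroup E] [Lattice E]
    [HasSolidNorm E] [IsOrderedAddMonoid E] [NormedSpace ℝ E] [PosSMulMono ℝ E]
    (Λ : StrongDual ℝ E) : ∃ P N : E →ₚ[ℝ] ℝ, ∀ f, Λ f = P f - N f := by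
  refine exists_positiveLinearMap_sub_eq_of_bddAbove Λ.toLinearMap fun f _ ↦ ⟨‖Λ‖ * ‖f‖, ?_⟩
  rintro _ ⟨g, ⟨hg_nonneg, hg_le⟩, rfl⟩
  have hgf : ‖g‖ ≤ ‖f‖ := norm_le_norm_of_abs_le_abs (abs_le_abs_of_nonneg hg_nonneg hg_le)
  calc Λ g ≤ ‖Λ g‖ := le_abs_self _
    _ ≤ ‖Λ‖ * ‖g‖ := Λ.le_opNorm g
    _ ≤ ‖Λ‖ * ‖f‖ := by gcongr

section BoundedContinuous

variable {X : Type*} [TopologicalSpace X]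

instance : PosSMulMono ℝ (X →ᵇ ℝ) :=
  ⟨fun _ hc _ _ hfg x ↦ mul_le_mul_of_nonneg_left (hfg x) hc⟩

/-- The inclusion of `C_c(X, ℝ)` into the bounded continuous functions, as a positive map: it
restricts functionals on bounded functions to the domain of the Riesz–Markov–Kakutani theorem. -/
noncomputable def boundedOfCompactlySupported : C_c(X, ℝ) →ₚ[ℝ] (X →ᵇ ℝ) where
  toFun f := .ofNormedAddCommGroup f f.continuous _
    (f.hasCompactSupport.exists_bound_of_continuous f.continuous).choose_spec
  map_add' _ _ := rfl
  map_smul' _ _ := rfl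
  monotone' _ _ hfg := hfg

@[simp]
theorem boundedOfCompactlySupported_apply (f : C_c(X, ℝ)) (x : X) :
    boundedOfCompactlySupported f x = f x := rfl

/-- Sequential convergence in the strict topology of the bounded continuous functions: uniform
boundedness together with uniform convergence on compact sets. -/
def TendstoStrictly (F : ℕ → X →ᵇ ℝ) (f : X →ᵇ ℝ) : Prop :=
  (∃ C, ∀ n, ‖F n‖ ≤ C) ∧ ∀ K, IsCompact K → TendstoUniformlyOn (fun n ↦ F n) f atTop K

/-- Sequential continuity of a functional for `TendstoStrictly`. -/
def StrictlySeqContinuous (Λ : (X →ᵇ ℝ) → ℝ) : Prop :=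
  ∀ F f, TendstoStrictly F f → Tendsto (fun n ↦ Λ (F n)) atTop (𝓝 (Λ f))

theorem tendstoStrictly_of_tendsto {F : ℕ → X →ᵇ ℝ} {f : X →ᵇ ℝ} (h : Tendsto F atTop (𝓝 f)) :
    TendstoStrictly F f := by
  obtain ⟨C, hC⟩ := (Metric.isBounded_range_of_tendsto F h).exists_norm_le
  exact ⟨⟨C, fun n ↦ hC _ (mem_range_self n)⟩, fun K _ ↦
    (BoundedContinuousFunction.tendsto_iff_tendstoUniformly.1 h).tendstoUniformlyOn⟩

theorem StrictlySeqContinuous.continuous {Λ : (X →ᵇ ℝ) → ℝ} (hΛ : StrictlySeqContinuous Λ) :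
    Continuous Λ :=
  SeqContinuous.continuous fun _ _ h ↦ hΛ _ _ (tendstoStrictly_of_tendsto h)

theorem norm_smul_cutoff_le {χ : C_c(X, ℝ)} (hχ : ∀ x, χ x ∈ Icc 0 1) (f : X →ᵇ ℝ) :
    ‖boundedOfCompactlySupported (f • χ)‖ ≤ ‖f‖ := by
  refine (BoundedContinuousFunction.norm_le (norm_nonneg f)).2 fun x ↦ ?_
  calc ‖f x * χ x‖ = ‖f x‖ * χ x := by rw [norm_mul, Real.norm_of_nonneg (hχ x).1]
    _ ≤ ‖f‖ * 1 := mul_le_mul (f.norm_coe_le_norm x) (hχ x).2 (hχ x).1 (norm_nonneg f)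
    _ = ‖f‖ := mul_one _

theorem tendstoStrictly_smul_cutoff {χ : ℕ → C_c(X, ℝ)} (hχ_mem : ∀ n x, χ n x ∈ Icc 0 1)
    (hχ_one : ∀ K, IsCompact K → ∀ᶠ n in atTop, EqOn (χ n) 1 K) (f : X →ᵇ ℝ) :
    TendstoStrictly (fun n ↦ boundedOfCompactlySupported (f • χ n)) f := by
  refine ⟨⟨‖f‖, fun n ↦ norm_smul_cutoff_le (hχ_mem n) f⟩, fun K hK ↦ ?_⟩
  refine TendstoUniformlyOn.congr (F := fun _ ↦ f)
    (fun _ hu ↦ .of_forall fun _ _ _ ↦ refl_mem_uniformity hu) ?_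
  filter_upwards [hχ_one K hK] with n hn x hx
  simp [hn hx]

theorem TendstoStrictly.tendsto_integral [MeasurableSpace X] [OpensMeasurableSpace X]
    {F : ℕ → X →ᵇ ℝ} {f : X →ᵇ ℝ} (hF : TendstoStrictly F f) (μ : Measure X) [IsFiniteMeasure μ] :
    Tendsto (fun n ↦ ∫ x, F n x ∂μ) atTop (𝓝 (∫ x, f x ∂μ)) := by
  obtain ⟨⟨C, hC⟩, hlim⟩ := hF
  exact tendsto_integral_of_dominated_convergence (fun _ ↦ C)
    (fun n ↦ (F n).continuous.stronglyMeasurable.aestronglyMeasurable) (integrable_const C)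
    (fun n ↦ .of_forall fun x ↦ ((F n).norm_coe_le_norm x).trans (hC n))
    (.of_forall fun x ↦ (hlim {x} isCompact_singleton).tendsto_at (mem_singleton x))

variable [T2Space X] [LocallyCompactSpace X]

theorem exists_cutoff_sequence [SigmaCompactSpace X] :
    ∃ χ : ℕ → C_c(X, ℝ), (∀ n x, χ n x ∈ Icc 0 1) ∧
      ∀ K, IsCompact K → ∀ᶠ n in atTop, EqOn (χ n) 1 K := by
  let K := CompactExhaustion.choice X
  choose χ hχ_one _ hχ_supp hχ_mem using fun n ↦
    exists_continuous_one_zero_of_isCompact (K.isCompact n) isClosed_empty (disjoint_empty _)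
  refine ⟨fun n ↦ ⟨χ n, hχ_supp n⟩, hχ_mem, fun L hL ↦ ?_⟩
  obtain ⟨m, hm⟩ := K.exists_superset_of_isCompact hL
  filter_upwards [eventually_ge_atTop m] with n hn
  exact (hχ_one n).mono (hm.trans (K.subset hn))

variable [MeasurableSpace X] [BorelSpace X]

theorem exists_isFiniteMeasure_integral_eq (P : (X →ᵇ ℝ) →ₚ[ℝ] ℝ) :
    ∃ μ : Measure X, IsFiniteMeasure μ ∧
      ∀ f : C_c(X, ℝ), P (boundedOfCompactlySupported f) = ∫ x, f x ∂μ := by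
  let P_c := P.comp boundedOfCompactlySupported
  let μ := RealRMK.rieszMeasure P_c
  have hμ_compact (K : Set X) (hK : IsCompact K) : μ K ≤ ENNReal.ofReal (P 1) := by
    obtain ⟨χ, hχ_one, -, hχ_supp, hχ_mem⟩ :=
      exists_continuous_one_zero_of_isCompact hK isClosed_empty (disjoint_empty _)
    let χ_c : C_c(X, ℝ) := ⟨χ, hχ_supp⟩
    calc μ K ≤ ENNReal.ofReal (P_c χ_c) :=
          RealRMK.rieszMeasure_le_of_eq_one P_c (fun x ↦ (hχ_mem x).1) hK hχ_one
      _ ≤ ENNReal.ofReal (P 1) :=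
          ENNReal.ofReal_le_ofReal (OrderHomClass.mono P fun x ↦ (hχ_mem x).2)
  have hμ_univ : μ univ ≤ ENNReal.ofReal (P 1) := by
    rw [isOpen_univ.measure_eq_iSup_isCompact]
    exact iSup₂_le fun K _ ↦ iSup_le (hμ_compact K)
  exact ⟨μ, ⟨hμ_univ.trans_lt ENNReal.ofReal_lt_top⟩,
    fun f ↦ (RealRMK.integral_rieszMeasure P_c f).symm⟩

theorem StrictlySeqContinuous.exists_integral_sub_integral_eq [SigmaCompactSpace X]
    {Λ : (X →ᵇ ℝ) →ₗ[ℝ] ℝ} (hΛ : StrictlySeqContinuous Λ) :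
    ∃ μ ν : Measure X, IsFiniteMeasure μ ∧ IsFiniteMeasure ν ∧
      ∀ f : X →ᵇ ℝ, Λ f = ∫ x, f x ∂μ - ∫ x, f x ∂ν := by
  obtain ⟨P, N, hPN⟩ := exists_positiveLinearMap_sub_eq_of_strongDual ⟨Λ, hΛ.continuous⟩
  obtain ⟨μ, hμ, hPμ⟩ := exists_isFiniteMeasure_integral_eq P
  obtain ⟨ν, hν, hNν⟩ := exists_isFiniteMeasure_integral_eq N
  refine ⟨μ, ν, hμ, hν, fun f ↦ ?_⟩
  obtain ⟨χ, hχ_mem, hχ_one⟩ := exists_cutoff_sequence (X := X)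
  have hlim := tendstoStrictly_smul_cutoff hχ_mem hχ_one f
  have hrep (n : ℕ) : Λ (boundedOfCompactlySupported (f • χ n)) =
      ∫ x, boundedOfCompactlySupported (f • χ n) x ∂μ -
        ∫ x, boundedOfCompactlySupported (f • χ n) x ∂ν := by
    simp only [boundedOfCompactlySupported_apply, ← hPμ, ← hNν]
    exact hPN _
  refine tendsto_nhds_unique (hΛ _ _ hlim) ?_
  simpa only [hrep] using (hlim.tendsto_integral μ).sub (hlim.tendsto_integral ν)

end BoundedContinuous

section SignedMeasure

variable {Ω : Type*} [MeasurableSpace Ω]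

theorem restrict_eq_self_of_measure_compl_eq_zero {μ : Measure Ω} {s : Set Ω} (h : μ sᶜ = 0) :
    μ.restrict s = μ :=
  Measure.restrict_eq_self_of_ae_mem h

theorem toSignedMeasure_sub_toSignedMeasure_eq_iff {μ ν ρ σ : Measure Ω} [IsFiniteMeasure μ]
    [IsFiniteMeasure ν] [IsFiniteMeasure ρ] [IsFiniteMeasure σ] :
    μ.toSignedMeasure - ν.toSignedMeasure = ρ.toSignedMeasure - σ.toSignedMeasure ↔
      μ + σ = ρ + ν := by
  rw [sub_eq_sub_iff_add_eq_add, ← Measure.toSignedMeasure_add, ← Measure.toSignedMeasure_add,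
    Measure.toSignedMeasure_eq_toSignedMeasure_iff]

theorem integral_sub_integral_eq_of_add_eq_add {μ ν ρ σ : Measure Ω} (h : μ + σ = ρ + ν)
    {f : Ω → ℝ} (hμ : Integrable f μ) (hν : Integrable f ν) (hρ : Integrable f ρ)
    (hσ : Integrable f σ) :
    ∫ x, f x ∂μ - ∫ x, f x ∂ν = ∫ x, f x ∂ρ - ∫ x, f x ∂σ := by
  rw [sub_eq_sub_iff_add_eq_add, ← integral_add_measure hμ hσ, ← integral_add_measure hρ hν, h]

theorem posPart_toJordanDecomposition_sub_le (μ ν : Measure Ω) [IsFiniteMeasure μ]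
    [IsFiniteMeasure ν] :
    (μ.toSignedMeasure - ν.toSignedMeasure).toJordanDecomposition.posPart ≤ μ := by
  rw [Measure.toJordanDecomposition_toSignedMeasure_sub]
  exact Measure.sub_le

theorem negPart_toJordanDecomposition_sub_le (μ ν : Measure Ω) [IsFiniteMeasure μ]
    [IsFiniteMeasure ν] :
    (μ.toSignedMeasure - ν.toSignedMeasure).toJordanDecomposition.negPart ≤ ν := by
  rw [Measure.toJordanDecomposition_toSignedMeasure_sub]
  exact Measure.sub_le

theorem integral_posPart_sub_integral_negPart (μ ν : Measure Ω) [IsFiniteMeasure μ]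
    [IsFiniteMeasure ν] {f : Ω → ℝ} (hμ : Integrable f μ) (hν : Integrable f ν) :
    ∫ x, f x ∂(μ.toSignedMeasure - ν.toSignedMeasure).toJordanDecomposition.posPart -
        ∫ x, f x ∂(μ.toSignedMeasure - ν.toSignedMeasure).toJordanDecomposition.negPart =
      ∫ x, f x ∂μ - ∫ x, f x ∂ν := by
  refine integral_sub_integral_eq_of_add_eq_add
    (toSignedMeasure_sub_toSignedMeasure_eq_iff.1 ?_)
    (hμ.mono_measure (posPart_toJordanDecomposition_sub_le μ ν))
    (hν.mono_measure (negPart_toJordanDecomposition_sub_le μ ν)) hμ hν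
  exact SignedMeasure.toSignedMeasure_toJordanDecomposition _

theorem signedMeasure_ext_of_forall_integral_sub_eq [TopologicalSpace Ω] [BorelSpace Ω]
    [HasOuterApproxClosed Ω] {s t : SignedMeasure Ω}
    (h : ∀ f : Ω →ᵇ ℝ,
      ∫ x, f x ∂s.toJordanDecomposition.posPart - ∫ x, f x ∂s.toJordanDecomposition.negPart =
        ∫ x, f x ∂t.toJordanDecomposition.posPart - ∫ x, f x ∂t.toJordanDecomposition.negPart) :
    s = t := by
  rw [← s.toSignedMeasure_toJordanDecomposition, ← t.toSignedMeasure_toJordanDecomposition]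
  refine toSignedMeasure_sub_toSignedMeasure_eq_iff.2
    (ext_of_forall_integral_eq_of_IsFiniteMeasure fun f ↦ ?_)
  rw [integral_add_measure (f.integrable _) (f.integrable _),
    integral_add_measure (f.integrable _) (f.integrable _), ← sub_eq_sub_iff_add_eq_add]
  exact h f

end SignedMeasure

section Sum

variable {X Y : Type*} [TopologicalSpace X] [TopologicalSpace Y]

instance [LocallyCompactSpace X] [LocallyCompactSpace Y] : LocallyCompactSpace (X ⊕ Y) where
  local_compact_nhds := by
    rintro (x | y) s hs
    · obtain ⟨K, hK_nhds, hKs, hK⟩ := local_compact_nhds (continuous_inl.continuousAt hs)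
      exact ⟨Sum.inl '' K, IsOpenEmbedding.inl.image_mem_nhds.2 hK_nhds, image_subset_iff.2 hKs,
        hK.image continuous_inl⟩
    · obtain ⟨K, hK_nhds, hKs, hK⟩ := local_compact_nhds (continuous_inr.continuousAt hs)
      exact ⟨Sum.inr '' K, IsOpenEmbedding.inr.image_mem_nhds.2 hK_nhds, image_subset_iff.2 hKs,
        hK.image continuous_inr⟩

variable [MeasurableSpace X] [BorelSpace X]

theorem measurableSet_borel_image_of_isOpenEmbedding {f : X → Y} (hf : IsOpenEmbedding f)
    {s : Set X} (hs : MeasurableSet s) : MeasurableSet[borel Y] (f '' s) := by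
  borelize Y
  exact hf.measurableEmbedding.measurableSet_image' hs

instance [MeasurableSpace Y] [BorelSpace Y] : BorelSpace (X ⊕ Y) where
  measurable_eq := by
    refine le_antisymm (fun s hs ↦ ?_) (MeasurableSpace.generateFrom_le fun s hs ↦ ?_)
    · obtain ⟨hs_inl, hs_inr⟩ := measurableSet_sum_iff.1 hs
      rw [← image_preimage_inl_union_image_preimage_inr s]
      exact .union (measurableSet_borel_image_of_isOpenEmbedding .inl hs_inl)
        (measurableSet_borel_image_of_isOpenEmbedding .inr hs_inr)
    · exact measurableSet_sum_iff.2 ⟨(hs.preimage continuous_inl).measurableSet,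
        (hs.preimage continuous_inr).measurableSet⟩

end Sum

section DetachedInterval

/-- The interval `[-T, 0]` with `0` made an isolated point: its bounded continuous functions
are the restrictions to `[-T, 0]` of the elements of `𝒞([-T, 0])`. -/
abbrev DetachedInterval (T : ℝ) : Type := Ico (-T) 0 ⊕ Unit

/-- The continuous bijection from `DetachedInterval T` onto `[-T, 0]`. -/
def attachZero (T : ℝ) : DetachedInterval T → ℝ := Sum.elim (↑) fun _ ↦ 0

variable {T : ℝ}

instance : LocallyCompactSpace (Ico (-T) 0) := isLocallyClosed_Ico.locallyCompactSpace

theorem attachZero_injective : (attachZero T).Injective :=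
  Subtype.val_injective.sumElim (Function.injective_of_subsingleton _) fun x _ ↦ x.2.2.ne

theorem range_attachZero (hT : 0 ≤ T) : range (attachZero T) = Icc (-T) 0 := by
  rw [attachZero, Sum.elim_range, Subtype.range_coe, range_const, Ico_union_right (neg_nonpos.2 hT)]

theorem measurableEmbedding_attachZero : MeasurableEmbedding (attachZero T) where
  injective := attachZero_injective
  measurable := measurable_subtype_coe.sumElim measurable_const
  measurableSet_image' s hs := by
    rw [attachZero, image_sumElim]
    exact .union (measurableSet_Ico.subtype_image (measurableSet_sum_iff.1 hs).1)
      (subsingleton_singleton.anti (image_subset_iff.2 fun _ _ ↦ rfl)).measurableSet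

theorem memScrC.continuous_comp_attachZero {η : ℝ → ℝ} (hη : memScrC T η) :
    Continuous (η ∘ attachZero T) :=
  continuous_sum_dom.2
    ⟨continuousOn_iff_continuous_domRestrict.1 hη.2, continuous_of_const fun _ _ ↦ rfl⟩

/-- An element of `𝒞([-T, 0])`, as a bounded continuous function on the detached interval. -/
noncomputable def memScrC.toDetached {η : ℝ → ℝ} (hη : memScrC T η) (hT : 0 ≤ T) :
    DetachedInterval T →ᵇ ℝ :=
  .ofNormedAddCommGroup (η ∘ attachZero T) hη.continuous_comp_attachZero hη.1.choose fun x ↦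
    hη.1.choose_spec _ (range_attachZero hT ▸ mem_range_self x)

/-- The element of `𝒞([-T, 0])` given by a bounded continuous function on the detached interval,
extended by `0` outside `[-T, 0]`. -/
noncomputable def ofDetached : (DetachedInterval T → ℝ) →ₗ[ℝ] ℝ → ℝ :=
  Function.ExtendByZero.linearMap ℝ (attachZero T)

theorem ofDetached_attachZero (f : DetachedInterval T → ℝ) (x : DetachedInterval T) :
    ofDetached f (attachZero T x) = f x := attachZero_injective.extend_apply f 0 x

theorem eqOn_ofDetached_comp_attachZero (hT : 0 ≤ T) (η : ℝ → ℝ) :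
    EqOn (ofDetached (η ∘ attachZero T)) η (Icc (-T) 0) := by
  rw [← range_attachZero hT]
  rintro _ ⟨x, rfl⟩
  exact ofDetached_attachZero _ x

theorem abs_ofDetached_le {f : DetachedInterval T → ℝ} {C : ℝ} (hT : 0 ≤ T) (hf : ∀ x, |f x| ≤ C) :
    ∀ x ∈ Icc (-T) 0, |ofDetached f x| ≤ C := by
  rw [← range_attachZero hT]
  rintro _ ⟨x, rfl⟩
  simpa only [ofDetached_attachZero] using hf x

theorem memScrC_ofDetached (hT : 0 ≤ T) (f : DetachedInterval T →ᵇ ℝ) :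
    memScrC T (ofDetached f) := by
  refine ⟨⟨‖f‖, abs_ofDetached_le hT f.norm_coe_le_norm⟩, ?_⟩
  rw [continuousOn_iff_continuous_domRestrict]
  exact (f.continuous.comp continuous_inl).congr fun x ↦ (ofDetached_attachZero _ (.inl x)).symm

/-- Sequential convergence in `𝒞([-T, 0])`. -/
def TendstoScrC (T : ℝ) (ηk : ℕ → ℝ → ℝ) (η : ℝ → ℝ) : Prop :=
  (∃ C, ∀ k, ∀ x ∈ Icc (-T) 0, |ηk k x| ≤ C) ∧
    (∀ K ⊆ Ico (-T) 0, IsCompact K → TendstoUniformlyOn ηk η atTop K) ∧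
      Tendsto (fun k ↦ ηk k 0) atTop (𝓝 (η 0))

theorem tendstoUniformlyOn_ofDetached {ι : Type*} {l : Filter ι} {F : ι → DetachedInterval T → ℝ}
    {f : DetachedInterval T → ℝ} {K : Set (DetachedInterval T)} (h : TendstoUniformlyOn F f l K) :
    TendstoUniformlyOn (fun k ↦ ofDetached (F k)) (ofDetached f) l (attachZero T '' K) := by
  intro u hu
  filter_upwards [h u hu] with k hk
  rintro _ ⟨x, hx, rfl⟩
  simpa only [ofDetached_attachZero] using hk x hx

theorem exists_isCompact_attachZero_image_eq {K : Set ℝ} (hK : IsCompact K)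
    (hK_sub : K ⊆ Ico (-T) 0) : ∃ L, IsCompact L ∧ attachZero T '' L = K := by
  have himage : ((↑) : Ico (-T) 0 → ℝ) '' ((↑) ⁻¹' K) = K := by
    rwa [Subtype.image_preimage_coe, inter_eq_right]
  refine ⟨Sum.inl '' ((↑) ⁻¹' K), (Subtype.isCompact_iff.2 ?_).image continuous_inl, ?_⟩
  · rwa [himage]
  · rw [image_image]
    exact himage

theorem TendstoStrictly.tendstoScrC_ofDetached (hT : 0 ≤ T) {F : ℕ → DetachedInterval T →ᵇ ℝ}
    {f : DetachedInterval T →ᵇ ℝ} (h : TendstoStrictly F f) :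
    TendstoScrC T (fun k ↦ ofDetached (F k)) (ofDetached f) := by
  obtain ⟨⟨C, hC⟩, hlim⟩ := h
  refine ⟨⟨C, fun k ↦ abs_ofDetached_le hT fun x ↦ ((F k).norm_coe_le_norm x).trans (hC k)⟩,
    fun K hK_sub hK ↦ ?_, ?_⟩
  · obtain ⟨L, hL, rfl⟩ := exists_isCompact_attachZero_image_eq hK hK_sub
    exact tendstoUniformlyOn_ofDetached (hlim L hL)
  · exact (tendstoUniformlyOn_ofDetached (hlim {.inr ()} isCompact_singleton)).tendsto_at
      (mem_image_of_mem _ (mem_singleton _))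

/-- The continuous linear functionals on `𝒞([-T, 0])`, as functions on all of `ℝ → ℝ` of which
only the values on `𝒞([-T, 0])` matter. -/
structure IsContinuousLinearScrC (T : ℝ) (Λ : (ℝ → ℝ) → ℝ) : Prop where
  map_add : ∀ η ξ, memScrC T η → memScrC T ξ → Λ (η + ξ) = Λ η + Λ ξ
  map_smul : ∀ (c : ℝ) η, memScrC T η → Λ (c • η) = c * Λ η
  tendsto : ∀ ηk η, (∀ k, memScrC T (ηk k)) → memScrC T η → TendstoScrC T ηk η →
    Tendsto (fun k ↦ Λ (ηk k)) atTop (𝓝 (Λ η))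

namespace IsContinuousLinearScrC

variable {Λ : (ℝ → ℝ) → ℝ}

theorem congr (hΛ : IsContinuousLinearScrC T Λ) (hT : 0 ≤ T) {η ξ : ℝ → ℝ}
    (hη : memScrC T η) (hξ : memScrC T ξ) (h : EqOn η ξ (Icc (-T) 0)) : Λ η = Λ ξ := by
  have hunif : TendstoUniformlyOn (fun _ : ℕ ↦ η) ξ atTop (Icc (-T) 0) := fun u hu ↦
    .of_forall fun _ x hx ↦ h hx ▸ refl_mem_uniformity hu
  obtain ⟨C, hC⟩ := hη.1
  exact tendsto_nhds_unique tendsto_const_nhds <| hΛ.tendsto (fun _ ↦ η) ξ (fun _ ↦ hη) hξ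
    ⟨⟨C, fun _ ↦ hC⟩, fun K hK _ ↦ hunif.mono (hK.trans Ico_subset_Icc_self),
      hunif.tendsto_at (right_mem_Icc.2 (neg_nonpos.2 hT))⟩

/-- The functional induced on the bounded continuous functions of the detached interval. -/
noncomputable def toDetached (hΛ : IsContinuousLinearScrC T Λ) (hT : 0 ≤ T) :
    (DetachedInterval T →ᵇ ℝ) →ₗ[ℝ] ℝ where
  toFun f := Λ (ofDetached f)
  map_add' f g := by
    rw [BoundedContinuousFunction.coe_add, LinearMap.map_add,
      hΛ.map_add _ _ (memScrC_ofDetached hT f) (memScrC_ofDetached hT g)]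
  map_smul' c f := by
    rw [BoundedContinuousFunction.coe_smul]
    exact (congrArg Λ (LinearMap.map_smul ofDetached c f)).trans
      (hΛ.map_smul c _ (memScrC_ofDetached hT f))

theorem strictlySeqContinuous_toDetached (hΛ : IsContinuousLinearScrC T Λ) (hT : 0 ≤ T) :
    StrictlySeqContinuous (hΛ.toDetached hT) := fun _ f h ↦
  hΛ.tendsto _ _ (fun _ ↦ memScrC_ofDetached hT _) (memScrC_ofDetached hT f)
    (h.tendstoScrC_ofDetached hT)

theorem toDetached_apply_toDetached (hΛ : IsContinuousLinearScrC T Λ) (hT : 0 ≤ T) {η : ℝ → ℝ}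
    (hη : memScrC T η) : hΛ.toDetached hT (hη.toDetached hT) = Λ η :=
  hΛ.congr hT (memScrC_ofDetached hT _) hη (eqOn_ofDetached_comp_attachZero hT η)

theorem exists_integral_sub_integral_eq (hΛ : IsContinuousLinearScrC T Λ) (hT : 0 ≤ T) :
    ∃ μ ν : Measure ℝ, IsFiniteMeasure μ ∧ IsFiniteMeasure ν ∧
      μ (Icc (-T) 0)ᶜ = 0 ∧ ν (Icc (-T) 0)ᶜ = 0 ∧ ∀ η, memScrC T η →
        Integrable η μ ∧ Integrable η ν ∧ Λ η = ∫ x, η x ∂μ - ∫ x, η x ∂ν := by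
  obtain ⟨μ, ν, hμ, hν, h⟩ :=
    (hΛ.strictlySeqContinuous_toDetached hT).exists_integral_sub_integral_eq
  have hnull (ρ : Measure (DetachedInterval T)) : ρ.map (attachZero T) (Icc (-T) 0)ᶜ = 0 := by
    rw [measurableEmbedding_attachZero.map_apply, ← range_attachZero hT, preimage_compl,
      preimage_range, compl_univ, measure_empty]
  refine ⟨μ.map (attachZero T), ν.map (attachZero T), inferInstance, inferInstance, hnull μ,
    hnull ν, fun η hη ↦ ⟨?_, ?_, ?_⟩⟩
  · exact measurableEmbedding_attachZero.integrable_map_iff.2 ((hη.toDetached hT).integrable μ)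
  · exact measurableEmbedding_attachZero.integrable_map_iff.2 ((hη.toDetached hT).integrable ν)
  · rw [measurableEmbedding_attachZero.integral_map, measurableEmbedding_attachZero.integral_map,
      ← hΛ.toDetached_apply_toDetached hT hη]
    exact h _

end IsContinuousLinearScrC

end DetachedInterval

/-- Riesz-type representation for `𝒞([-T,0])`: every linear functional `Λ`, sequentially
continuous for the convergence of `𝒞([-T,0])` (uniform boundedness, uniform convergence on
compacts of `[-T,0[`, convergence at `0`), is represented by a unique finite signed Borel
measure `μ` on `[-T,0]`: `Λη = ∫_{[-T,0]} η dμ`. -/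
theorem stmt8 (T : ℝ) (hT : 0 < T) (Λ : (ℝ → ℝ) → ℝ)
    (hadd : ∀ η ξ, memScrC T η → memScrC T ξ → Λ (η + ξ) = Λ η + Λ ξ)
    (hsmul : ∀ (c : ℝ) η, memScrC T η → Λ (c • η) = c * Λ η)
    (hcont : ∀ (ηk : ℕ → ℝ → ℝ) (η : ℝ → ℝ),
      (∀ k, memScrC T (ηk k)) → memScrC T η →
      (∃ C, ∀ k, ∀ x ∈ Set.Icc (-T) (0:ℝ), |ηk k x| ≤ C) →
      (∀ K ⊆ Set.Ico (-T) (0:ℝ), IsCompact K → TendstoUniformlyOn ηk η atTop K) →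
      Tendsto (fun k => ηk k 0) atTop (𝓝 (η 0)) →
      Tendsto (fun k => Λ (ηk k)) atTop (𝓝 (Λ η))) :
    ∃! μ : MeasureTheory.SignedMeasure ℝ,
      μ.toJordanDecomposition.posPart (Set.Icc (-T) 0)ᶜ = 0 ∧
      μ.toJordanDecomposition.negPart (Set.Icc (-T) 0)ᶜ = 0 ∧
      ∀ η, memScrC T η →
        Λ η = (∫ x in Set.Icc (-T) 0, η x ∂μ.toJordanDecomposition.posPart) -
              ∫ x in Set.Icc (-T) 0, η x ∂μ.toJordanDecomposition.negPart := by
  have hΛ : IsContinuousLinearScrC T Λ :=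
    ⟨hadd, hsmul, fun ηk η hηk hη ⟨hbdd, hunif, hzero⟩ ↦ hcont ηk η hηk hη hbdd hunif hzero⟩
  refine existsUnique_of_exists_of_unique ?_ ?_
  · obtain ⟨μ, ν, hμ, hν, hμ_null, hν_null, hrep⟩ := hΛ.exists_integral_sub_integral_eq hT.le
    have hpos_null := (posPart_toJordanDecomposition_sub_le μ ν).absolutelyContinuous hμ_null
    have hneg_null := (negPart_toJordanDecomposition_sub_le μ ν).absolutelyContinuous hν_null
    refine ⟨μ.toSignedMeasure - ν.toSignedMeasure, hpos_null, hneg_null, fun η hη ↦ ?_⟩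
    obtain ⟨hημ, hην, hΛη⟩ := hrep η hη
    rw [restrict_eq_self_of_measure_compl_eq_zero hpos_null,
      restrict_eq_self_of_measure_compl_eq_zero hneg_null,
      integral_posPart_sub_integral_negPart μ ν hημ hην, hΛη]
  · rintro s t ⟨hs_pos, hs_neg, hs⟩ ⟨ht_pos, ht_neg, ht⟩
    refine signedMeasure_ext_of_forall_integral_sub_eq fun f ↦ ?_
    have hf : memScrC T f := ⟨⟨‖f‖, fun x _ ↦ f.norm_coe_le_norm x⟩, f.continuous.continuousOn⟩
    have hst := (hs f hf).symm.trans (ht f hf)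
    rwa [restrict_eq_self_of_measure_compl_eq_zero hs_pos,
      restrict_eq_self_of_measure_compl_eq_zero hs_neg,
      restrict_eq_self_of_measure_compl_eq_zero ht_pos,
      restrict_eq_self_of_measure_compl_eq_zero ht_neg] at hst
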